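/- Let 3 ≤ r ≤ n. Let π₀ = B(V₀) and π₁ = B(V₁) be q-subgeometries of PG(r-1,q^n), both tangent to the line l_∞ = PG(U), with l_∞ not contained in the extension of any hyperplane of π₀ or of π₁. (a) If there exists an L-linear bijection θ : U → U whose induced map on points carries S(π₀,l_∞) onto S(π₁,l_∞), then there exists an L-linear bijection τ : L^r → L^r with τ(U) = U whose induced map on points carries π₀ onto π₁, i.e. { L·τ(v) : L·v ∈ π₀ } = π₁. (b) Conversely, if there exists an L-linear bijection τ : L^r → L^r with τ(U) = U and { L·τ(v) : L·v ∈ π₀ } = π₁, then { L·τ(v) : L·v ∈ S(π₀,l_∞) } = S(π₁,l_∞). -/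

import Mathlib

open Submodule Module

/-- `BSet L X` is the set of projective points (1-dimensional `L`-subspaces of `W`)
spanned by the nonzero vectors of `X`. -/
def BSet (L : Type*) [Field L] {W : Type*} [AddCommGroup W] [Module L W]
    (X : Set W) : Set (Submodule L W) :=
  {P | ∃ x ∈ X, x ≠ 0 ∧ P = Submodule.span L {x}}

/-- The splash of the `q`-subgeometry `B(V)` of `PG(W)` on the line `PG(U)`:
the set of points of `PG(U)` lying in the `L`-span (extension) of some hyperplane
(`(r-1)`-dimensional `K`-subspace) of `V`. -/
def Splash (K L : Type*) [Field K] [Field L] [Algebra K L]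
    {W : Type*} [AddCommGroup W] [Module L W] [Module K W] [IsScalarTower K L W]
    (V : Submodule K W) (U : Submodule L W) (r : ℕ) : Set (Submodule L W) :=
  {P | Module.finrank L P = 1 ∧ P ≤ U ∧
    ∃ H : Submodule K W, H ≤ V ∧ Module.finrank K H = r - 1 ∧
      P ≤ Submodule.span L (H : Set W)}

section AffineEquivalence

variable {K L : Type*} [Field K] [Field L] [Algebra K L]

/-- Consequence of the identity of Hua: if the inverses of the elements of `A` form a subspace
`B`, then multiplication by `a ^ 2` with `a ∈ A` carries `B` into `A`. -/
theorem Submodule.sq_mul_mem_of_inv {A B : Submodule K L} (hAB : ∀ x, x ∈ B ↔ x⁻¹ ∈ A)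
    {a b : L} (ha : a ∈ A) (hb : b ∈ B) : a ^ 2 * b ∈ A := by
  rcases eq_or_ne a 0 with rfl | ha0
  · simp
  rcases eq_or_ne b 0 with rfl | hb0
  · simp
  rcases eq_or_ne (1 - a * b) 0 with h | h
  · have : a ^ 2 * b = a := by linear_combination (-a) * h
    rwa [this]
  have hbA : b⁻¹ - a ∈ A := A.sub_mem ((hAB b).1 hb) ha
  have h1 : (b⁻¹ - a)⁻¹ ∈ B := by rw [hAB, inv_inv]; exact hbA
  have h2 : a⁻¹ ∈ B := by rw [hAB, inv_inv]; exact ha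
  have h3 := (hAB _).1 (B.add_mem h2 h1)
  have h4 : b⁻¹ - a = (1 - a * b) / b := by field_simp
  have h5 : (a⁻¹ + (b⁻¹ - a)⁻¹)⁻¹ = a - a ^ 2 * b := by
    rw [h4, inv_div, inv_eq_iff_eq_inv]
    have h6 : a - a ^ 2 * b = a * (1 - a * b) := by ring
    rw [h6]
    field_simp
    ring
  rw [h5] at h3
  simpa using A.sub_mem ha h3

/-- If `x ↦ k / x` carries `A` onto `A'`, so does some homothety. -/
theorem Submodule.exists_mul_mem_iff_of_div {A A' : Submodule K L} {k : L} (hk : k ≠ 0)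
    (h : ∀ x, x ∈ A ↔ k / x ∈ A') : ∃ c : L, c ≠ 0 ∧ ∀ x, x ∈ A ↔ c * x ∈ A' := by
  by_cases hA : ∃ a ∈ A, a ≠ 0
  · obtain ⟨a, ha, ha0⟩ := hA
    let B : Submodule K L := A'.comap (LinearMap.mulLeft K k)
    have hB : ∀ x, x ∈ B ↔ x⁻¹ ∈ A := fun x => by
      rw [h, div_inv_eq_mul]; exact Iff.rfl
    have hA : ∀ x, x ∈ A ↔ x⁻¹ ∈ B := fun x => by rw [hB, inv_inv]
    refine ⟨k * (a⁻¹) ^ 2, by positivity, fun x => ⟨fun hx => ?_, fun hx => ?_⟩⟩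
    · have := Submodule.sq_mul_mem_of_inv hA ((hA a).1 ha) hx
      rw [mul_assoc]; exact this
    · have hx' : (a⁻¹) ^ 2 * x ∈ B := by rw [mul_assoc] at hx; exact hx
      have := Submodule.sq_mul_mem_of_inv hB ha hx'
      rwa [← mul_assoc, ← mul_pow, mul_inv_cancel₀ ha0, one_pow, one_mul] at this
  · push Not at hA
    refine ⟨k, hk, fun x => ⟨fun hx => by simp [hA x hx], fun hx => ?_⟩⟩
    have hx0 : x = 0 := inv_eq_zero.1 (hA x⁻¹ ((h _).2 (by rwa [div_inv_eq_mul])))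
    rw [hx0]
    exact A.zero_mem

/-- Two subspaces of `L`, each completed by the point at infinity, are projectively equivalent
only if they are homothetic. Division by zero makes `s / t ∈ A` true at infinity. -/
theorem Submodule.exists_mul_mem_iff_of_mobius {A A' : Submodule K L} {α β γ δ : L}
    (hdet : α * δ - β * γ ≠ 0)
    (h : ∀ s t : L, s / t ∈ A ↔ (α * s + β * t) / (γ * s + δ * t) ∈ A') :
    ∃ c : L, c ≠ 0 ∧ ∀ x, x ∈ A ↔ c * x ∈ A' := by
  rcases eq_or_ne γ 0 with rfl | hγ
  · have hα : α ≠ 0 := by rintro rfl; simp at hdet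
    have hδ : δ ≠ 0 := by rintro rfl; simp at hdet
    have hβ : β / δ ∈ A' := by simpa using h 0 1
    refine ⟨α / δ, div_ne_zero hα hδ, fun x => ?_⟩
    have hx := h x 1
    have e : (α * x + β * 1) / (0 * x + δ * 1) = α / δ * x + β / δ := by
      rw [zero_mul, zero_add, mul_one, mul_one]; ring
    rwa [div_one, e, A'.add_mem_iff_left hβ] at hx
  · have hα : α / γ ∈ A' := by simpa using h 1 0
    have hδ : δ / γ ∈ A := by
      have h0 : γ * -(δ / γ) + δ * 1 = 0 := by field_simp; ring
      have h1 := h (-(δ / γ)) 1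
      rw [h0] at h1
      simpa using h1
    have hk : (β * γ - α * δ) / γ ^ 2 ≠ 0 :=
      div_ne_zero (fun h0 => hdet (by linear_combination -h0)) (pow_ne_zero 2 hγ)
    refine Submodule.exists_mul_mem_iff_of_div hk fun x => ?_
    rcases eq_or_ne x 0 with rfl | hx0
    · simp
    have hx := h (x - δ / γ) 1
    have e : (α * (x - δ / γ) + β * 1) / (γ * (x - δ / γ) + δ * 1)
        = α / γ + (β * γ - α * δ) / γ ^ 2 / x := by
      have : γ * (x - δ / γ) + δ * 1 = γ * x := by field_simp; ring
      rw [this]; field_simp; ring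
    rwa [div_one, e, A'.add_mem_iff_right hα, A.sub_mem_iff_left hδ] at hx

end AffineEquivalence

section Subgeometry

variable {K L W : Type*} [Field K] [Field L] [Algebra K L] [AddCommGroup W] [Module L W]

/-- The `L`-linear form on `W` with coefficients in `K`. -/
noncomputable def extendForm {m : ℕ} (b : Basis (Fin (m + 1)) L W) (a : Fin (m + 1) → K) :
    W →ₗ[L] L :=
  b.constr L fun i => algebraMap K L (a i)

theorem extendForm_basis {m : ℕ} (b : Basis (Fin (m + 1)) L W) (a : Fin (m + 1) → K)
    (i : Fin (m + 1)) : extendForm b a (b i) = algebraMap K L (a i) :=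
  b.constr_basis L _ i

theorem extendForm_line {m : ℕ} (b : Basis (Fin (m + 1)) L W) (a : Fin (m + 1) → K)
    (w : Fin m → L) (s t : L) :
    extendForm b a (s • b 0 + t • ∑ i, w i • b i.succ)
      = s * algebraMap K L (a 0) + t * ∑ i, a i.succ • w i := by
  simp [extendForm_basis, map_sum, Algebra.smul_def, mul_comm]

theorem extendForm_ne_zero {m : ℕ} (b : Basis (Fin (m + 1)) L W) {a : Fin (m + 1) → K}
    (ha : a ≠ 0) : extendForm b a ≠ 0 := by
  obtain ⟨j, hj⟩ := Function.ne_iff.1 ha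
  intro h
  have := extendForm_basis b a j
  rw [h, LinearMap.zero_apply, eq_comm, map_eq_zero] at this
  exact hj this

theorem map_image_bSet (τ : W ≃ₗ[L] W) (X : Set W) :
    (fun P => Submodule.map (τ : W →ₗ[L] W) P) '' BSet L X = BSet L (τ '' X) := by
  ext P
  constructor
  · rintro ⟨_, ⟨x, hx, hx0, rfl⟩, rfl⟩
    exact ⟨τ x, ⟨x, hx, rfl⟩, by simpa using hx0, by simp [Submodule.map_span]⟩
  · rintro ⟨_, ⟨x, hx, rfl⟩, hx0, rfl⟩
    exact ⟨span L {x}, ⟨x, hx, by simpa using hx0, rfl⟩, by simp [Submodule.map_span]⟩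

variable [Module K W]

/-- Coordinates adapted to a subgeometry `B(V)` and a line `PG(U)` meeting it in the point of
`b 0`: the remaining coordinates `w` of a second point of the line are independent over `K`. -/
structure IsTangentFrame {m : ℕ} (V : Submodule K W) (U : Submodule L W)
    (b : Basis (Fin (m + 1)) L W) (w : Fin m → L) : Prop where
  span_basis : span K (Set.range b) = V
  span_pair : span L {b 0, ∑ i, w i • b i.succ} = U
  linearIndependent : LinearIndependent K w

namespace IsTangentFrame

variable {m : ℕ} {V : Submodule K W} {U : Submodule L W} {b : Basis (Fin (m + 1)) L W}
  {w : Fin m → L}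

theorem mem_iff (h : IsTangentFrame V U b w) {x : W} :
    x ∈ U ↔ ∃ s t : L, s • b 0 + t • ∑ i, w i • b i.succ = x := by
  rw [← h.span_pair, mem_span_pair]

theorem eq_zero (h : IsTangentFrame V U b w) (hm : 0 < m) {s t : L}
    (hst : s • b 0 + t • ∑ i, w i • b i.succ = 0) : s = 0 ∧ t = 0 := by
  have hli := Fintype.linearIndependent_iff.1 b.linearIndependent (Fin.cons s fun i => t * w i)
    (by simpa [Fin.sum_univ_succ, Finset.smul_sum, smul_smul] using hst)
  refine ⟨by simpa using hli 0, ?_⟩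
  have := hli (Fin.succ ⟨0, hm⟩)
  rw [Fin.cons_succ] at this
  exact (mul_eq_zero.1 this).resolve_right (h.linearIndependent.ne_zero _)

end IsTangentFrame

variable [IsScalarTower K L W]

theorem finrank_span_extension_le [FiniteDimensional K W] (H : Submodule K W) :
    finrank L (span L (H : Set W)) ≤ finrank K H := by
  let c := finBasis K H
  have hc : span K (Set.range fun i => (c i : W)) = H := by
    have := congrArg (Submodule.map H.subtype) c.span_eq
    rwa [Submodule.map_span, ← Set.range_comp, Submodule.map_top, Submodule.range_subtype] at this
  have : span L (H : Set W) = span L (Set.range fun i => (c i : W)) := by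
    conv_lhs => rw [← hc]
    exact Submodule.span_span_of_tower K L _
  rw [this]
  exact (finrank_range_le_card _).trans_eq (Fintype.card_fin _)

/-- Subspaces of a subgeometry have the same dimension as their extensions. -/
theorem finrank_span_extension [FiniteDimensional K W] [FiniteDimensional L W]
    {V H : Submodule K W} (hV : finrank K V = finrank L W) (hspan : span L (V : Set W) = ⊤)
    (hH : H ≤ V) : finrank L (span L (H : Set W)) = finrank K H := by
  obtain ⟨C, hC⟩ := Submodule.exists_isCompl (H.comap V.subtype)
  have hdim := Submodule.finrank_add_eq_of_isCompl hC
  have h1 : finrank K (H.comap V.subtype) = finrank K H :=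
    (Submodule.comapSubtypeEquivOfLe hH).finrank_eq
  have h2 : finrank K (C.map V.subtype) = finrank K C :=
    Submodule.finrank_map_subtype_eq V C
  have hsup : span L (H : Set W) ⊔ span L (C.map V.subtype : Set W) = ⊤ := by
    rw [eq_top_iff, ← hspan, span_le]
    intro v hv
    have : (⟨v, hv⟩ : V) ∈ H.comap V.subtype ⊔ C := by rw [hC.sup_eq_top]; trivial
    obtain ⟨x, hx, y, hy, hxy⟩ := Submodule.mem_sup.1 this
    have hv' : v = (x : W) + y := by rw [← Submodule.coe_add, hxy]
    rw [hv']
    exact Submodule.add_mem_sup (subset_span hx) (subset_span ⟨y, hy, rfl⟩)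
  have h3 := Submodule.finrank_add_le_finrank_add_finrank
    (span L (H : Set W)) (span L (C.map V.subtype : Set W))
  rw [hsup, finrank_top] at h3
  have h4 := finrank_span_extension_le (L := L) H
  have h5 := finrank_span_extension_le (L := L) (C.map V.subtype)
  omega

/-- Hyperplanes of a subgeometry are cut out by forms with coefficients in `K`. -/
theorem exists_hyperplane_span_eq_ker [FiniteDimensional K W] {m : ℕ}
    (b : Basis (Fin (m + 1)) L W) {V : Submodule K W} (hb : span K (Set.range b) = V)
    (hV : finrank K V = m + 1) (a : Fin (m + 1) → K) (ha : a ≠ 0) :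
    ∃ H ≤ V, finrank K H = m ∧ span L (H : Set W) = LinearMap.ker (extendForm b a) := by
  have : FiniteDimensional L W := b.finiteDimensional_of_finite
  have hW : finrank L W = m + 1 := by simpa using finrank_eq_card_basis b
  have hbV : ∀ i, b i ∈ V := fun i => hb ▸ subset_span ⟨i, rfl⟩
  have hspan : span L (V : Set W) = ⊤ := by
    rw [← hb, Submodule.span_span_of_tower, b.span_eq]
  let H : Submodule K W := V ⊓ (LinearMap.ker (extendForm b a)).restrictScalars K
  have hker : span L (H : Set W) = LinearMap.ker (extendForm b a) := by
    refine le_antisymm (span_le.2 fun x hx => hx.2) fun x hx => ?_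
    obtain ⟨j, hj⟩ := Function.ne_iff.1 ha
    have hj : a j ≠ 0 := hj
    have hj' : algebraMap K L (a j) ≠ 0 := by simpa using hj
    have key : x = ∑ i, b.repr x i • (b i - (a i / a j) • b j) := by
      have h0 : ∑ i, b.repr x i * algebraMap K L (a i) = 0 := by
        have h : extendForm b a x = 0 := hx
        rw [← b.sum_repr x, map_sum] at h
        simpa only [map_smul, extendForm_basis, smul_eq_mul] using h
      have h1 : ∑ i, b.repr x i • ((a i / a j) • b j)
          = ((∑ i, b.repr x i * algebraMap K L (a i)) / algebraMap K L (a j)) • b j := by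
        rw [Finset.sum_div, Finset.sum_smul]
        refine Finset.sum_congr rfl fun i _ => ?_
        rw [← algebraMap_smul L (a i / a j) (b j), smul_smul, map_div₀, mul_div_assoc]
      simp only [smul_sub, Finset.sum_sub_distrib, h1, h0, b.sum_repr]
      simp
    rw [key]
    refine sum_mem fun i _ => smul_mem _ _ (subset_span ⟨?_, ?_⟩)
    · exact V.sub_mem (hbV i) (V.smul_mem _ (hbV j))
    · change extendForm b a _ = 0
      rw [map_sub, ← algebraMap_smul L (a i / a j) (b j), map_smul, extendForm_basis,
        extendForm_basis, smul_eq_mul, ← map_mul, div_mul_cancel₀ _ hj, sub_self]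
  refine ⟨H, inf_le_left, ?_, hker⟩
  have h1 := finrank_span_extension (hV.trans hW.symm) hspan (show H ≤ V from inf_le_left)
  have h2 := Module.Dual.finrank_ker_add_one_of_ne_zero (extendForm_ne_zero b ha)
  rw [hker] at h1
  omega

theorem exists_form_of_hyperplane [FiniteDimensional K W] {m : ℕ}
    (b : Basis (Fin (m + 1)) L W) {V : Submodule K W} (hb : span K (Set.range b) = V)
    (hV : finrank K V = m + 1) {H : Submodule K W} (hH : H ≤ V) (hHm : finrank K H = m) :
    ∃ a : Fin (m + 1) → K, a ≠ 0 ∧ span L (H : Set W) ≤ LinearMap.ker (extendForm b a) := by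
  subst hb
  have hlt : H.comap (span K (Set.range b)).subtype < ⊤ := by
    rw [lt_top_iff_ne_top]
    intro h
    have := (Submodule.comapSubtypeEquivOfLe hH).finrank_eq
    rw [h, finrank_top] at this
    omega
  obtain ⟨f, hf, hle⟩ := Submodule.exists_le_ker_of_lt_top _ hlt
  let c := b.restrictScalars K
  have hext : ∀ v : span K (Set.range b),
      extendForm b (fun i => f (c i)) (v : W) = algebraMap K L (f v) := by
    intro v
    have : ((extendForm b fun i => f (c i)).restrictScalars K) ∘ₗ (span K (Set.range b)).subtype
        = Algebra.linearMap K L ∘ₗ f := by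
      refine c.ext fun i => ?_
      simp [c, Basis.restrictScalars_apply, extendForm_basis]
    exact LinearMap.congr_fun this v
  refine ⟨fun i => f (c i), fun h => hf (c.ext fun i => congrFun h i), span_le.2 fun x hx => ?_⟩
  have := hle (show (⟨x, hH hx⟩ : span K (Set.range b)) ∈ _ from hx)
  change extendForm b _ ((⟨x, hH hx⟩ : span K (Set.range b)) : W) = 0
  rw [hext, LinearMap.mem_ker.1 this, map_zero]

theorem exists_isTangentFrame [FiniteDimensional K W] [FiniteDimensional L W] {m : ℕ}
    {V : Submodule K W} {U : Submodule L W} (hW : finrank L W = m + 1)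
    (hV : finrank K V = m + 1) (hspan : span L (V : Set W) = ⊤) (hU : finrank L U = 2)
    (hpt : ∃ P, P ∈ BSet L (V : Set W) ∧ P ≤ U)
    (hext : ∀ H ≤ V, finrank K H = m → ¬ U ≤ span L (H : Set W)) :
    ∃ (b : Basis (Fin (m + 1)) L W) (w : Fin m → L), IsTangentFrame V U b w := by
  obtain ⟨_, ⟨e, heV, he, rfl⟩, heU⟩ := hpt
  obtain ⟨C, hC⟩ := Submodule.exists_isCompl (span K {(⟨e, heV⟩ : V)})
  have hdim := Submodule.finrank_add_eq_of_isCompl hC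
  rw [finrank_span_singleton (by simpa using he), hV] at hdim
  let c := finBasisOfFinrankEq K C (show finrank K C = m by omega)
  let g : Fin (m + 1) → W := Fin.cons e fun i => ((c i : V) : W)
  have hg : span K (Set.range g) = V := by
    have h1 : span K (Set.range fun i => (c i : V)) = C := by
      have := congrArg (Submodule.map C.subtype) c.span_eq
      rwa [Submodule.map_span, ← Set.range_comp, Submodule.map_top, Submodule.range_subtype] at this
    have h2 := congrArg (Submodule.map V.subtype) hC.sup_eq_top
    rw [← h1, ← Submodule.span_union, Submodule.map_span, Submodule.map_top,
      Submodule.range_subtype, Set.image_union, ← Set.range_comp, Set.image_singleton] at h2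
    rw [Fin.range_cons, Set.insert_eq]
    exact h2
  have hgL : ⊤ ≤ span L (Set.range g) := by
    rw [← Submodule.span_span_of_tower K L, hg, hspan]
  let b := basisOfTopLeSpanOfCardEqFinrank g hgL (by simp [hW])
  have hbg : ⇑b = g := coe_basisOfTopLeSpanOfCardEqFinrank g hgL _
  have hb0 : b 0 = e := by rw [hbg]; rfl
  obtain ⟨u, huU, hue⟩ : ∃ u ∈ U, u ∉ span L {e} := by
    by_contra! h
    have := Submodule.finrank_mono (show U ≤ span L {e} from h)
    rw [hU, finrank_span_singleton he] at this
    omega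
  let w : Fin m → L := fun i => b.repr u i.succ
  have hu : u = b.repr u 0 • b 0 + ∑ i, w i • b i.succ := by
    rw [← Fin.sum_univ_succ fun i => b.repr u i • b i, b.sum_repr]
  have heU' : e ∈ U := heU (mem_span_singleton_self e)
  have hu' : ∑ i, w i • b i.succ = u - b.repr u 0 • e := by
    rw [hb0] at hu
    rw [eq_sub_iff_add_eq', ← hu]
  have hpair : span L {b 0, ∑ i, w i • b i.succ} = U := by
    rw [hu', hb0]
    have hmem : u - b.repr u 0 • e ∈ span L {e, u - b.repr u 0 • e} := subset_span (by simp)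
    have he' : e ∈ span L {e, u - b.repr u 0 • e} := subset_span (by simp)
    refine Submodule.eq_of_le_of_finrank_le (span_le.2 ?_) ?_
    · rintro x (rfl | rfl)
      · exact heU'
      · exact U.sub_mem huU (U.smul_mem _ heU')
    · have hlt : span L {e} < span L {e, u - b.repr u 0 • e} := by
        refine lt_of_le_of_ne (span_mono (by simp)) fun h => hue ?_
        rw [h]
        simpa using add_mem hmem (smul_mem _ (b.repr u 0) he')
      have := Submodule.finrank_lt_finrank_of_lt hlt
      rw [finrank_span_singleton he] at this
      omega
  have hb : span K (Set.range b) = V := by rw [hbg, hg]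
  refine ⟨b, w, hb, hpair, ?_⟩
  rw [Fintype.linearIndependent_iff]
  intro d hd
  by_contra! hne
  obtain ⟨j, hj⟩ := hne
  let a : Fin (m + 1) → K := Fin.cons 0 d
  have ha : a ≠ 0 := fun h => hj (by simpa [a] using congrFun h j.succ)
  obtain ⟨H, hHV, hHm, hH⟩ := exists_hyperplane_span_eq_ker b hb hV a ha
  refine hext H hHV hHm ?_
  rw [hH, ← hpair, span_le]
  have key := extendForm_line b a w
  rintro x (rfl | rfl)
  · simpa [a] using key 1 0
  · simpa [a, hd] using key 0 1

namespace IsTangentFrame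

variable {m : ℕ} {V : Submodule K W} {U : Submodule L W} {b : Basis (Fin (m + 1)) L W}
  {w : Fin m → L}

/-- On a tangent line the splash consists of the tangency point and the affine points with
coordinate in the `K`-span of `w`. -/
theorem span_mem_splash_iff [FiniteDimensional K W] (h : IsTangentFrame V U b w) (hm : 0 < m)
    (hV : finrank K V = m + 1) {s t : L} (hst : s • b 0 + t • ∑ i, w i • b i.succ ≠ 0) :
    span L {s • b 0 + t • ∑ i, w i • b i.succ} ∈ Splash K L V U (m + 1)
      ↔ s / t ∈ span K (Set.range w) := by
  have hform : span L {s • b 0 + t • ∑ i, w i • b i.succ} ∈ Splash K L V U (m + 1)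
      ↔ ∃ a : Fin (m + 1) → K, a ≠ 0 ∧ s * algebraMap K L (a 0) + t * ∑ i, a i.succ • w i = 0 := by
    constructor
    · rintro ⟨-, -, H, hHV, hHm, hP⟩
      obtain ⟨a, ha, hHa⟩ := exists_form_of_hyperplane b h.span_basis hV hHV hHm
      exact ⟨a, ha, (extendForm_line b a w s t).symm.trans
        (hHa (hP (mem_span_singleton_self _)))⟩
    · rintro ⟨a, ha, h0⟩
      obtain ⟨H, hHV, hHm, hH⟩ := exists_hyperplane_span_eq_ker b h.span_basis hV a ha
      refine ⟨finrank_span_singleton hst, ?_, H, hHV, hHm, ?_⟩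
      · rw [span_singleton_le_iff_mem, h.mem_iff]
        exact ⟨s, t, rfl⟩
      · rw [span_singleton_le_iff_mem, hH, LinearMap.mem_ker, extendForm_line, h0]
  rw [hform]
  rcases eq_or_ne t 0 with rfl | ht
  · simp only [div_zero, zero_mem, iff_true, zero_mul, add_zero]
    exact ⟨Pi.single (Fin.succ ⟨0, hm⟩) 1, by simp, by simp⟩
  rw [mem_span_range_iff_exists_fun]
  constructor
  · rintro ⟨a, ha, h0⟩
    have ha0 : a 0 ≠ 0 := by
      intro ha0
      have h1 : ∑ i, a i.succ • w i = 0 := by simpa [ha0, ht] using h0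
      have h2 := Fintype.linearIndependent_iff.1 h.linearIndependent _ h1
      exact ha (funext (Fin.cases ha0 h2))
    have ha0' : algebraMap K L (a 0) ≠ 0 := by simpa using ha0
    refine ⟨fun i => -(a 0)⁻¹ * a i.succ, ?_⟩
    simp only [mul_smul, ← Finset.smul_sum]
    rw [Algebra.smul_def, map_neg, map_inv₀]
    field_simp
    linear_combination -h0
  · rintro ⟨d, hd⟩
    refine ⟨Fin.cons (-1) d, fun h0 => by simpa using congrFun h0 0, ?_⟩
    simp only [Fin.cons_zero, Fin.cons_succ, hd]
    rw [mul_div_cancel₀ _ ht]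
    simp

/-- The independent tuple of a tangent frame may be replaced by any other basis of its span. -/
theorem exists_rebase [FiniteDimensional L W] (h : IsTangentFrame V U b w) {v : Fin m → L}
    (hv : LinearIndependent K v) (hvw : span K (Set.range v) = span K (Set.range w)) :
    ∃ b' : Basis (Fin (m + 1)) L W, IsTangentFrame V U b' v := by
  have hwv : ∀ i, ∃ c : Fin m → K, ∑ j, c j • v j = w i := fun i =>
    mem_span_range_iff_exists_fun K |>.1 (hvw ▸ subset_span ⟨i, rfl⟩)
  have hvw' : ∀ i, ∃ c : Fin m → K, ∑ j, c j • w j = v i := fun i =>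
    mem_span_range_iff_exists_fun K |>.1 (hvw ▸ subset_span ⟨i, rfl⟩)
  choose M hM using hwv
  choose N hN using hvw'
  have hNM : ∀ i k, ∑ j, M i j * N j k = if i = k then 1 else 0 := by
    intro i k
    have h1 : ∑ k, (∑ j, M i j * N j k - if i = k then 1 else 0) • w k = 0 := by
      simp only [sub_smul, Finset.sum_sub_distrib, Finset.sum_smul, mul_smul, ite_smul, one_smul,
        zero_smul, Finset.sum_ite_eq, Finset.mem_univ, if_true]
      rw [Finset.sum_comm]
      simp only [← Finset.smul_sum, hN, hM, sub_self]
    exact sub_eq_zero.1 (Fintype.linearIndependent_iff.1 h.linearIndependent _ h1 k)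
  let g : Fin (m + 1) → W := Fin.cons (b 0) fun j => ∑ i, M i j • b i.succ
  have hg : span K (Set.range g) = V := by
    rw [← h.span_basis]
    apply le_antisymm <;> rw [span_le] <;> rintro _ ⟨i, rfl⟩
    · obtain rfl | ⟨j, rfl⟩ := i.eq_zero_or_eq_succ
      · exact subset_span ⟨0, rfl⟩
      · have : g j.succ = ∑ i, M i j • b i.succ := rfl
        rw [this]
        exact sum_mem fun k _ => smul_mem _ _ (subset_span ⟨k.succ, rfl⟩)
    · obtain rfl | ⟨k, rfl⟩ := i.eq_zero_or_eq_succ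
      · exact subset_span ⟨0, rfl⟩
      · have : b k.succ = ∑ j, N j k • g j.succ := by
          simp only [g, Fin.cons_succ, Finset.smul_sum, smul_smul]
          rw [Finset.sum_comm]
          simp only [← Finset.sum_smul, mul_comm (N _ k), hNM]
          simp
        rw [this]
        exact sum_mem fun j _ => smul_mem _ _ (subset_span ⟨j.succ, rfl⟩)
  have hgL : ⊤ ≤ span L (Set.range g) := by
    rw [← Submodule.span_span_of_tower K L, hg, ← h.span_basis, Submodule.span_span_of_tower,
      b.span_eq]
  let b' := basisOfTopLeSpanOfCardEqFinrank g hgL (by simpa using (finrank_eq_card_basis b).symm)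
  have hbg : ⇑b' = g := coe_basisOfTopLeSpanOfCardEqFinrank g hgL _
  refine ⟨b', by rw [hbg, hg], ?_, hv⟩
  have : ∑ j, v j • b' j.succ = ∑ i, w i • b i.succ := by
    simp only [hbg, g, Fin.cons_succ, Finset.smul_sum, ← hM, Finset.sum_smul]
    rw [Finset.sum_comm]
    refine Finset.sum_congr rfl fun i _ => Finset.sum_congr rfl fun j _ => ?_
    rw [smul_comm, smul_assoc]
  rw [this, hbg, ← h.span_pair]
  rfl

end IsTangentFrame

theorem map_mem_splash [FiniteDimensional K W] [FiniteDimensional L W] {V₀ V₁ : Submodule K W}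
    {U : Submodule L W} {r : ℕ} (hW : finrank L W = r)
    (hV₀ : finrank K V₀ = r) (hV₀span : span L (V₀ : Set W) = ⊤)
    (hV₁ : finrank K V₁ = r) (hV₁span : span L (V₁ : Set W) = ⊤)
    (τ : W ≃ₗ[L] W) (hτU : Submodule.map (τ : W →ₗ[L] W) U = U)
    (hτ : (fun P => Submodule.map (τ : W →ₗ[L] W) P) '' BSet L (V₀ : Set W)
      = BSet L (V₁ : Set W)) {P : Submodule L W} (hP : P ∈ Splash K L V₀ U r) :
    Submodule.map (τ : W →ₗ[L] W) P ∈ Splash K L V₁ U r := by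
  obtain ⟨h1, hPU, H, hHV, hHr, hPH⟩ := hP
  let T : Submodule L W := Submodule.map (τ : W →ₗ[L] W) (span L (H : Set W))
  have hT : finrank L T = r - 1 := by
    rw [LinearEquiv.finrank_map_eq, finrank_span_extension (hV₀.trans hW.symm) hV₀span hHV, hHr]
  let H' : Submodule K W := V₁ ⊓ T.restrictScalars K
  have hspan : span L (H' : Set W) = T := by
    refine le_antisymm (span_le.2 fun x hx => hx.2) ?_
    rw [show T = span L ((τ : W →ₗ[L] W) '' (H : Set W)) from Submodule.map_span _ _, span_le]
    rintro _ ⟨x, hx, rfl⟩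
    rcases eq_or_ne x 0 with rfl | hx0
    · simp
    have : Submodule.map (τ : W →ₗ[L] W) (span L {x}) ∈ BSet L (V₁ : Set W) :=
      hτ ▸ ⟨_, ⟨x, hHV hx, hx0, rfl⟩, rfl⟩
    obtain ⟨y, hy, -, hxy⟩ := this
    have hyT : y ∈ T := by
      have : y ∈ Submodule.map (τ : W →ₗ[L] W) (span L {x}) := hxy ▸ mem_span_singleton_self y
      exact Submodule.map_mono (span_mono (by simpa using hx)) this
    have hxy' : (τ : W →ₗ[L] W) x ∈ span L {y} :=
      hxy ▸ Submodule.mem_map_of_mem (mem_span_singleton_self x)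
    exact span_mono (Set.singleton_subset_iff.2 (show y ∈ H' from ⟨hy, hyT⟩)) hxy'
  refine ⟨(LinearEquiv.finrank_map_eq τ P).trans h1, hτU ▸ Submodule.map_mono hPU, H', inf_le_left,
    ?_, hspan ▸ Submodule.map_mono hPH⟩
  rw [← finrank_span_extension (hV₁.trans hW.symm) hV₁span (show H' ≤ V₁ from inf_le_left), hspan, hT]

/-- A projectivity of the space fixing the line carries splashes to splashes. -/
theorem map_image_splash [FiniteDimensional K W] [FiniteDimensional L W] {V₀ V₁ : Submodule K W}
    {U : Submodule L W} {r : ℕ} (hW : finrank L W = r)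
    (hV₀ : finrank K V₀ = r) (hV₀span : span L (V₀ : Set W) = ⊤)
    (hV₁ : finrank K V₁ = r) (hV₁span : span L (V₁ : Set W) = ⊤)
    (τ : W ≃ₗ[L] W) (hτU : Submodule.map (τ : W →ₗ[L] W) U = U)
    (hτ : (fun P => Submodule.map (τ : W →ₗ[L] W) P) '' BSet L (V₀ : Set W)
      = BSet L (V₁ : Set W)) :
    (fun P => Submodule.map (τ : W →ₗ[L] W) P) '' Splash K L V₀ U r = Splash K L V₁ U r := by
  have hcancel : ∀ P : Submodule L W,
      Submodule.map (τ.symm : W →ₗ[L] W) (Submodule.map (τ : W →ₗ[L] W) P) = P := fun P => by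
    rw [← Submodule.map_comp]; simp
  have hcancel' : ∀ P : Submodule L W,
      Submodule.map (τ : W →ₗ[L] W) (Submodule.map (τ.symm : W →ₗ[L] W) P) = P := fun P => by
    rw [← Submodule.map_comp]; simp
  apply Set.Subset.antisymm
  · rintro _ ⟨P, hP, rfl⟩
    exact map_mem_splash hW hV₀ hV₀span hV₁ hV₁span τ hτU hτ hP
  · intro P hP
    refine ⟨_, map_mem_splash hW hV₁ hV₁span hV₀ hV₀span τ.symm ?_ ?_ hP, hcancel' P⟩
    · conv_lhs => rw [← hτU]
      exact hcancel U
    · rw [← hτ, Set.image_image]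
      simp [hcancel]

/-- A projectivity of a tangent line carrying one splash onto the other extends to the space. -/
theorem exists_extension_of_splash [FiniteDimensional K W] [FiniteDimensional L W]
    {V₀ V₁ : Submodule K W} {U : Submodule L W} {m : ℕ} (hm : 0 < m)
    (hV₀ : finrank K V₀ = m + 1) (hV₁ : finrank K V₁ = m + 1)
    {b₀ b₁ : Basis (Fin (m + 1)) L W} {w₀ w₁ : Fin m → L}
    (h₀ : IsTangentFrame V₀ U b₀ w₀) (h₁ : IsTangentFrame V₁ U b₁ w₁) (θ : U ≃ₗ[L] U)
    (hθ : {Q | ∃ x : U, (x : W) ≠ 0 ∧ span L {(x : W)} ∈ Splash K L V₀ U (m + 1) ∧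
      Q = span L {(θ x : W)}} = Splash K L V₁ U (m + 1)) :
    ∃ τ : W ≃ₗ[L] W, Submodule.map (τ : W →ₗ[L] W) U = U ∧
      (fun P => Submodule.map (τ : W →ₗ[L] W) P) '' BSet L (V₀ : Set W)
        = BSet L (V₁ : Set W) := by
  have hiff : ∀ x : U, (x : W) ≠ 0 → (span L {(x : W)} ∈ Splash K L V₀ U (m + 1) ↔
      span L {(θ x : W)} ∈ Splash K L V₁ U (m + 1)) := by
    intro x hx
    rw [← hθ]
    refine ⟨fun h => ⟨x, hx, h, rfl⟩, ?_⟩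
    rintro ⟨y, -, hy, hxy⟩
    have hspan : span L {x} = span L {y} := by
      apply Submodule.map_injective_of_injective
        (f := U.subtype ∘ₗ (θ : U →ₗ[L] U)) (U.injective_subtype.comp θ.injective)
      simpa [Submodule.map_span] using hxy
    have := congrArg (Submodule.map U.subtype) hspan
    simp only [Submodule.map_span, Set.image_singleton, Submodule.subtype_apply] at this
    rwa [this]
  set u₀ := ∑ i, w₀ i • b₀ i.succ with hu₀
  set u₁ := ∑ i, w₁ i • b₁ i.succ with hu₁
  have hline : ∀ s t : L, s • b₀ 0 + t • u₀ ∈ U := fun s t => h₀.mem_iff.2 ⟨s, t, rfl⟩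
  have he : b₀ 0 ∈ U := by simpa using hline 1 0
  have hu : u₀ ∈ U := by simpa using hline 0 1
  obtain ⟨α, γ, hαγ⟩ := h₁.mem_iff.1 (θ ⟨b₀ 0, he⟩).2
  obtain ⟨β, δ, hβδ⟩ := h₁.mem_iff.1 (θ ⟨u₀, hu⟩).2
  rw [← hu₁] at hαγ hβδ
  have hθst : ∀ s t : L, (θ ⟨s • b₀ 0 + t • u₀, hline s t⟩ : W)
      = (α * s + β * t) • b₁ 0 + (γ * s + δ * t) • u₁ := by
    intro s t
    have : (⟨s • b₀ 0 + t • u₀, hline s t⟩ : U) = s • ⟨b₀ 0, he⟩ + t • ⟨u₀, hu⟩ := rfl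
    rw [this, map_add, map_smul, map_smul, Submodule.coe_add, Submodule.coe_smul,
      Submodule.coe_smul, ← hαγ, ← hβδ]
    module
  have hinj : ∀ s t : L, α * s + β * t = 0 → γ * s + δ * t = 0 → s = 0 ∧ t = 0 := by
    intro s t h1 h2
    refine h₀.eq_zero hm ?_
    have h3 := hθst s t
    rw [h1, h2, zero_smul, zero_smul, add_zero] at h3
    have h4 : θ ⟨s • b₀ 0 + t • u₀, hline s t⟩ = 0 := Subtype.ext h3
    rw [LinearEquiv.map_eq_zero_iff] at h4
    exact congrArg Subtype.val h4
  have hdet : α * δ - β * γ ≠ 0 := by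
    intro hd
    obtain ⟨hδ, hγ⟩ := hinj δ (-γ) (by linear_combination hd) (by ring)
    obtain ⟨hβ, hα⟩ := hinj β (-α) (by ring) (by linear_combination -hd)
    have := hinj 1 0 (by simpa using hα) (by simpa using hγ)
    exact one_ne_zero this.1
  obtain ⟨c, hc, hcA⟩ := Submodule.exists_mul_mem_iff_of_mobius
    (A := span K (Set.range w₀)) (A' := span K (Set.range w₁)) hdet fun s t => by
      by_cases hst : s • b₀ 0 + t • u₀ = 0
      · obtain ⟨rfl, rfl⟩ := h₀.eq_zero hm hst
        simp
      have h1 := hiff ⟨_, hline s t⟩ hst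
      have h2 : (θ ⟨_, hline s t⟩ : W) ≠ 0 := fun h => hst <| by
        have h4 : θ ⟨s • b₀ 0 + t • u₀, hline s t⟩ = 0 := Subtype.ext h
        rw [LinearEquiv.map_eq_zero_iff] at h4
        exact congrArg Subtype.val h4
      rw [hθst] at h1 h2
      rwa [h₀.span_mem_splash_iff hm hV₀ hst, h₁.span_mem_splash_iff hm hV₁ h2] at h1
  have hspan : span K (Set.range fun i => c * w₀ i) = span K (Set.range w₁) := by
    have h1 : Submodule.map (LinearMap.mulLeft K c) (span K (Set.range w₀))
        = span K (Set.range fun i => c * w₀ i) := by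
      rw [Submodule.map_span, ← Set.range_comp]; rfl
    rw [← h1]
    ext y
    constructor
    · rintro ⟨x, hx, rfl⟩
      exact (hcA x).1 hx
    · intro hy
      refine ⟨c⁻¹ * y, (hcA _).2 ?_, ?_⟩ <;> simp [mul_inv_cancel_left₀ hc, hy]
  have hli : LinearIndependent K fun i => c * w₀ i :=
    h₀.linearIndependent.map' (LinearMap.mulLeft K c)
      (LinearMap.ker_eq_bot.2 (mul_right_injective₀ hc))
  obtain ⟨b, hb⟩ := h₁.exists_rebase hli hspan
  let τ := b₀.equiv b (Equiv.refl _)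
  have hτ : ∀ i, τ (b₀ i) = b i := fun i => by simp [τ]
  refine ⟨τ, ?_, ?_⟩
  · conv_lhs => rw [← h₀.span_pair]
    rw [← hb.span_pair, Submodule.map_span, Set.image_pair]
    have h1 : ∑ i, (c * w₀ i) • b i.succ = c • τ u₀ := by
      simp [hu₀, hτ, Finset.smul_sum, mul_smul]
    simp only [LinearEquiv.coe_coe, ← hu₀, h1, hτ, span_insert,
      span_singleton_smul_eq (IsUnit.mk0 c hc)]
  · rw [map_image_bSet]
    congr 1
    have : Submodule.map ((τ : W →ₗ[L] W).restrictScalars K) V₀ = V₁ := by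
      rw [← h₀.span_basis, ← hb.span_basis, Submodule.map_span, ← Set.range_comp]
      congr 2
      exact funext hτ
    rw [← this]
    rfl

end Subgeometry

/-- (a) a projectivity of the line carrying one splash onto the other
extends to a projectivity of the whole space fixing the line and carrying one
subgeometry onto the other; (b) conversely, such a projectivity of the space carries
the first splash onto the second. -/
theorem splash_equivalence_linear
    (K L : Type*) [Field K] [Field L] [Algebra K L] [Fintype K] [Fintype L]
    (r n : ℕ) (hr : 3 ≤ r) (hrn : r ≤ n) (hrank : Module.finrank K L = n)
    (V₀ V₁ : Submodule K (Fin r → L))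
    (hV₀rank : Module.finrank K V₀ = r)
    (hV₀span : Submodule.span L (V₀ : Set (Fin r → L)) = ⊤)
    (hV₁rank : Module.finrank K V₁ = r)
    (hV₁span : Submodule.span L (V₁ : Set (Fin r → L)) = ⊤)
    (U : Submodule L (Fin r → L)) (hU : Module.finrank L U = 2)
    (htangent₀ : ∃! P, P ∈ BSet L (V₀ : Set (Fin r → L)) ∧ P ≤ U)
    (htangent₁ : ∃! P, P ∈ BSet L (V₁ : Set (Fin r → L)) ∧ P ≤ U)
    (hext₀ : ∀ H : Submodule K (Fin r → L), H ≤ V₀ → Module.finrank K H = r - 1 →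
      ¬ U ≤ Submodule.span L (H : Set (Fin r → L)))
    (hext₁ : ∀ H : Submodule K (Fin r → L), H ≤ V₁ → Module.finrank K H = r - 1 →
      ¬ U ≤ Submodule.span L (H : Set (Fin r → L))) :
    -- (a)
    ((∃ θ : U ≃ₗ[L] U,
        {Q | ∃ x : U, (x : Fin r → L) ≠ 0 ∧
            Submodule.span L {(x : Fin r → L)} ∈ Splash K L V₀ U r ∧
            Q = Submodule.span L {(θ x : Fin r → L)}} = Splash K L V₁ U r) →
      ∃ τ : (Fin r → L) ≃ₗ[L] (Fin r → L),
        Submodule.map (τ : (Fin r → L) →ₗ[L] (Fin r → L)) U = U ∧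
        (fun P => Submodule.map (τ : (Fin r → L) →ₗ[L] (Fin r → L)) P) ''
            BSet L (V₀ : Set (Fin r → L)) = BSet L (V₁ : Set (Fin r → L))) ∧
    -- (b)
    (∀ τ : (Fin r → L) ≃ₗ[L] (Fin r → L),
      Submodule.map (τ : (Fin r → L) →ₗ[L] (Fin r → L)) U = U →
      (fun P => Submodule.map (τ : (Fin r → L) →ₗ[L] (Fin r → L)) P) ''
          BSet L (V₀ : Set (Fin r → L)) = BSet L (V₁ : Set (Fin r → L)) →
      (fun P => Submodule.map (τ : (Fin r → L) →ₗ[L] (Fin r → L)) P) ''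
          Splash K L V₀ U r = Splash K L V₁ U r) := by
  have : FiniteDimensional K L := Module.Finite.of_finite
  have hW : finrank L (Fin r → L) = r := by simp
  refine ⟨fun ⟨θ, hθ⟩ => ?_, fun τ hτU hτ =>
    map_image_splash hW hV₀rank hV₀span hV₁rank hV₁span τ hτU hτ⟩
  obtain ⟨m, hm⟩ : ∃ m, r = m + 1 := ⟨r - 1, by omega⟩
  have hm' : r - 1 = m := by omega
  rw [hm'] at hext₀ hext₁
  replace hV₀rank := hV₀rank.trans hm
  replace hV₁rank := hV₁rank.trans hm
  obtain ⟨b₀, w₀, h₀⟩ := exists_isTangentFrame (hW.trans hm) hV₀rank hV₀span hU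
    htangent₀.exists hext₀
  obtain ⟨b₁, w₁, h₁⟩ := exists_isTangentFrame (hW.trans hm) hV₁rank hV₁span hU
    htangent₁.exists hext₁
  have hsplash : ∀ V : Submodule K (Fin r → L), Splash K L V U r = Splash K L V U (m + 1) :=
    fun V => congrArg (Splash K L V U) hm
  rw [hsplash V₀, hsplash V₁] at hθ
  exact exists_extension_of_splash (by omega) hV₀rank hV₁rank h₀ h₁ θ hθ
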